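/- For every integer l > 1: a linear functional φ ∈ M₄(l)* satisfies PD(φ) = 0 if and only if φ vanishes identically on S₄(l); moreover the image of PD : M₄(l)* → M₄(l) is exactly S₄(l). In particular, the induced map S₄(l)* → S₄(l) is a linear isomorphism, i.e. the pairing on S₄(l) induced by PD is nondegenerate. -/

import Mathlib

open scoped BigOperators

namespace MW

variable (l : ℕ)

/-- Index type for the basis symbols: `0 ↦ x²`, `1 ↦ xy`, `2 ↦ y²`. -/
abbrev Sym := Fin 3 × ZMod l × ZMod l

/-- The free ℂ-vector space on the symbols. -/
abbrev V := Sym l →₀ ℂ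

/-- `gcd(u,v,l) = 1`. -/
def copr (u v : ZMod l) : Prop := Nat.gcd (Nat.gcd (ZMod.val u) (ZMod.val v)) l = 1

instance (u v : ZMod l) : Decidable (copr l u v) := by unfold copr; infer_instance

noncomputable def X2 (u v : ZMod l) : V l := Finsupp.single (0, u, v) 1
noncomputable def XY (u v : ZMod l) : V l := Finsupp.single (1, u, v) 1
noncomputable def Y2 (u v : ZMod l) : V l := Finsupp.single (2, u, v) 1

/-- The relation subspace: the relations of Merel–Shokurov on coprime symbols,
together with the (dummy) basis vectors at non-coprime indices. -/
noncomputable def Rel : Submodule ℂ (V l) :=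
  Submodule.span ℂ
    ({ w | ∃ u v, ¬ copr l u v ∧ (w = X2 l u v ∨ w = XY l u v ∨ w = Y2 l u v) } ∪
     { w | ∃ u v, copr l u v ∧
        (w = X2 l u v + Y2 l v (-u) ∨
         w = XY l u v - XY l v (-u) ∨
         w = Y2 l u v + X2 l v (-u) ∨
         w = XY l v (-u - v) - XY l (-u - v) u + Y2 l (-u - v) u + X2 l u v - XY l u v) })

/-- The space of weight four modular symbols of level `l`. -/
abbrev M := V l ⧸ Rel l

noncomputable def x2 (u v : ZMod l) : M l := Submodule.Quotient.mk (X2 l u v)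
noncomputable def xy (u v : ZMod l) : M l := Submodule.Quotient.mk (XY l u v)
noncomputable def y2 (u v : ZMod l) : M l := Submodule.Quotient.mk (Y2 l u v)

/-- The class of `p₂·x²(u,v) + p₁·xy(u,v) + p₀·y²(u,v)` in `M l`. -/
noncomputable def pcl (p2 p1 p0 : ℂ) (u v : ZMod l) : M l :=
  p2 • x2 l u v + p1 • xy l u v + p0 • y2 l u v

/-- Reduction `ZMod l → ZMod (gcd(a,l))`. -/
noncomputable def castg (a : ZMod l) : ZMod l →+* ZMod (Nat.gcd (ZMod.val a) l) :=
  ZMod.castHom (Nat.gcd_dvd_right (ZMod.val a) l) (ZMod (Nat.gcd (ZMod.val a) l))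

/-- The functional on `V l` attached to the cusp data `(a, b)`. -/
noncomputable def psiV (a : ZMod l) (b : ZMod (Nat.gcd (ZMod.val a) l)) : V l →ₗ[ℂ] ℂ :=
  Finsupp.lift ℂ ℂ (Sym l) fun p =>
    if copr l p.2.1 p.2.2 then
      (if p.1 = 0 then
        ((if p.2.1 = a ∧ castg l a p.2.2 = b then (1 : ℂ) else 0) +
         (if p.2.1 = -a ∧ castg l a p.2.2 = -b then (1 : ℂ) else 0))
       else if p.1 = 2 then
        (-(if p.2.2 = a ∧ castg l a p.2.1 = -b then (1 : ℂ) else 0) -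
          (if p.2.2 = -a ∧ castg l a p.2.1 = b then (1 : ℂ) else 0))
       else 0)
    else 0

/-- The cuspidal subspace `S₄(l) ⊆ M₄(l)`: the (image in `M l` of the) intersection
of the kernels of all the functionals `ψ_{(a,b)}`. -/
noncomputable def S : Submodule ℂ (M l) :=
  Submodule.map (Rel l).mkQ
    (⨅ (a : ZMod l), ⨅ (b : ZMod (Nat.gcd (ZMod.val a) l)), ⨅ (_ : IsUnit b),
      LinearMap.ker (psiV l a b))

/-- The Poincaré duality map (as a function on the dual space). -/
noncomputable def PD [NeZero l] (φ : Module.Dual ℂ (M l)) : M l :=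
  (24 : ℂ)⁻¹ • ∑ u : ZMod l, ∑ v : ZMod l,
    ( φ (pcl l 1 (-2) 1 (-v) (u + v) - pcl l 1 2 1 v (v - u)) • x2 l u v
      - (2 : ℂ) • φ (pcl l 0 (-1) 1 (-v) (u + v) + pcl l 0 1 1 v (v - u)) • xy l u v
      + φ (pcl l 0 0 1 (-v) (u + v) - pcl l 0 0 1 v (v - u)) • y2 l u v )

end MW

/-!
Let `W` be the space of coefficient vectors indexed by the pairs with `gcd(u, v, l) = 1`. It carries
operators `σ`, `ρ` of orders `4`, `3`, isometries of a nondegenerate symmetric form, such that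
`M₄(l) = W / ((1 + σ)W + (1 + ρ + ρ²)W)`. A functional `φ` is represented by a vector `f` killed by
`1 + σ` and `1 + ρ + ρ²` (a period vector), and `PD φ` is the class of `(ρ² - ρ)f / 24`. As `ρ` is
an isometry with `ρ³ = 1`, the operator `ρ² - ρ` is skew, so `ker PD` is the annihilator of
`range PD`, and it is enough to show that `range PD ⊆ S₄(l)` and that `ker PD` vanishes on `S₄(l)`.

The functionals `ψ_{(a,b)}` are represented by vectors spanning the space of all `g - σg` with
`σ²g = g` and `ρg = σg` (the boundary vectors). These are orthogonal to `(ρ² - ρ)f` for every period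
vector `f`, which is the first inclusion. Conversely, if `(ρ² - ρ)f` lies in the relation space,
averaging over `σ²` writes `2(ρ² - ρ)f` as `a + b` with `σa = a` and `ρb = b`; applying `ρ² - ρ`,
whose square is `-3` on period vectors, recovers `f` from `a` and shows that it is a boundary
vector.
-/

namespace MW

section SkewDuality

variable {K W : Type*} [Field K] [AddCommGroup W] [Module K W] {D : Module.Dual K W →ₗ[K] W}

lemma ker_eq_dualAnnihilator_range_of_skew (hD : ∀ φ ψ : Module.Dual K W, φ (D ψ) = -ψ (D φ)) :
    LinearMap.ker D = (LinearMap.range D).dualAnnihilator := by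
  ext φ
  rw [LinearMap.mem_ker, Submodule.mem_dualAnnihilator, ← Module.forall_dual_apply_eq_zero_iff K]
  simp [hD φ]

lemma ker_and_range_of_skew (hD : ∀ φ ψ : Module.Dual K W, φ (D ψ) = -ψ (D φ)) {N : Submodule K W}
    (hrange : LinearMap.range D ≤ N) (hker : LinearMap.ker D ≤ N.dualAnnihilator) :
    LinearMap.ker D = N.dualAnnihilator ∧ LinearMap.range D = N := by
  rw [ker_eq_dualAnnihilator_range_of_skew hD] at hker ⊢
  have hrange_eq : LinearMap.range D = N :=
    hrange.antisymm (Subspace.dualAnnihilator_le_dualAnnihilator_iff.1 hker)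
  exact ⟨congrArg _ hrange_eq, hrange_eq⟩

end SkewDuality

section PeriodRelations

variable {K W : Type*} [Field K] [AddCommGroup W] [Module K W]

/-- The Manin relations for the action of two operators `σ`, `ρ` of orders `4` and `3`. The quotient
by them is the space of modular symbols. -/
def relations (σ ρ : Module.End K W) : Submodule K W :=
  LinearMap.range (1 + σ) ⊔ LinearMap.range (1 + ρ + ρ ^ 2)

/-- The vectors satisfying the period relations; they represent the functionals which vanish on
`relations σ ρ`. -/
def periods (σ ρ : Module.End K W) : Submodule K W :=
  LinearMap.ker (1 + σ) ⊓ LinearMap.ker (1 + ρ + ρ ^ 2)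

/-- The coboundaries `g - σ g` of the even vectors `g` fixed by the parabolic element `σ⁻¹ρ`; they
represent the functionals attached to the cusps. -/
def boundary (σ ρ : Module.End K W) : Submodule K W :=
  (LinearMap.ker (σ ^ 2 - 1) ⊓ LinearMap.ker (ρ - σ)).map (1 - σ)

variable {σ ρ : Module.End K W}

lemma mem_periods {f : W} : f ∈ periods σ ρ ↔ σ f = -f ∧ f + ρ f + ρ (ρ f) = 0 := by
  simp [periods, pow_two, eq_neg_iff_add_eq_zero, add_comm]

lemma mem_boundary {f : W} :
    f ∈ boundary σ ρ ↔ ∃ g, σ (σ g) = g ∧ ρ g = σ g ∧ g - σ g = f := by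
  simp [boundary, pow_two, sub_eq_zero, and_assoc]

lemma apply_four_of_pow_four_eq_one (hσ : σ ^ 4 = 1) (x : W) : σ (σ (σ (σ x))) = x := by
  simpa [pow_succ] using LinearMap.congr_fun hσ x

lemma apply_three_of_pow_three_eq_one (hρ : ρ ^ 3 = 1) (x : W) : ρ (ρ (ρ x)) = x := by
  simpa [pow_succ] using LinearMap.congr_fun hρ x

lemma exists_fixed_add_fixed_of_mem_relations (hσ : σ ^ 4 = 1) (hρ : ρ ^ 3 = 1)
    (hσρ : Commute (σ ^ 2) ρ) {e : W} (he : e ∈ relations σ ρ) :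
    ∃ a b, σ a = a ∧ ρ b = b ∧ e + σ (σ e) = a + b := by
  obtain ⟨_, ⟨m, rfl⟩, _, ⟨n, rfl⟩, rfl⟩ := Submodule.mem_sup.1 he
  have hcomm (x : W) : ρ (σ (σ x)) = σ (σ (ρ x)) := by
    simpa [pow_two] using (LinearMap.congr_fun hσρ.eq x).symm
  refine ⟨m + σ m + σ (σ m) + σ (σ (σ m)),
    n + ρ n + ρ (ρ n) + σ (σ (n + ρ n + ρ (ρ n))), ?_, ?_, ?_⟩
  · simp only [map_add, apply_four_of_pow_four_eq_one hσ]
    abel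
  · simp only [map_add, hcomm, apply_three_of_pow_three_eq_one hρ]
    abel
  · simp only [pow_two, LinearMap.add_apply, Module.End.one_apply, Module.End.mul_apply, map_add]
    abel

lemma mem_boundary_of_eq_sub (h2 : (2 : K) ≠ 0) (hρ : ρ ^ 3 = 1) {a f : W} (ha : σ a = a)
    (hf : σ f = -f) (hfa : f = ρ (ρ a) - ρ a) : f ∈ boundary σ ρ := by
  refine mem_boundary.2 ⟨(2 : K)⁻¹ • (a + f), ?_, ?_, ?_⟩
  · simp only [map_smul, map_add, map_neg, ha, hf, neg_neg]
  · have hρf : ρ f = a - ρ (ρ a) := by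
      rw [hfa, map_sub, apply_three_of_pow_three_eq_one hρ]
    rw [map_smul, map_smul, map_add, map_add, ha, hf, hρf, hfa]
    congr 1
    abel
  · rw [map_smul, map_add, ha, hf, ← smul_sub, add_sub_add_left_eq_sub, sub_neg_eq_add,
      ← two_smul K, inv_smul_smul₀ h2]

-- On the period relations `(ρ ^ 2 - ρ) ^ 2 = ρ ^ 2 + ρ - 2` acts as `-3`, so `f` can be recovered.
lemma mem_boundary_of_mem_relations (h6 : (6 : K) ≠ 0) (hσ : σ ^ 4 = 1) (hρ : ρ ^ 3 = 1)
    (hσρ : Commute (σ ^ 2) ρ) {f : W} (hf : f ∈ periods σ ρ)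
    (hrel : ρ (ρ f) - ρ f ∈ relations σ ρ) : f ∈ boundary σ ρ := by
  obtain ⟨hσf, hρf⟩ := mem_periods.1 hf
  obtain ⟨a, b, ha, hb, hab⟩ := exists_fixed_add_fixed_of_mem_relations hσ hρ hσρ hrel
  have hcomm (x : W) : σ (σ (ρ x)) = ρ (σ (σ x)) := by
    simpa [pow_two] using LinearMap.congr_fun hσρ.eq x
  have hsum : (2 : K) • (ρ (ρ f) - ρ f) = a + b := by
    rw [← hab]
    simp only [map_sub, hcomm, hσf, map_neg, neg_neg, two_smul]
  have hneg_six : ρ (ρ a) - ρ a = (-6 : K) • f := by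
    have ha' : a = (2 : K) • (ρ (ρ f) - ρ f) - b := eq_sub_of_add_eq hsum.symm
    simp only [ha', map_sub, map_smul, hb, apply_three_of_pow_three_eq_one hρ]
    have hρρf : ρ (ρ f) = -f - ρ f := by
      rw [← sub_eq_zero, ← hρf]
      abel
    rw [hρρf]
    module
  have h2 : (2 : K) ≠ 0 := fun h => h6 (by linear_combination 3 * h)
  refine mem_boundary_of_eq_sub (a := (-6 : K)⁻¹ • a) h2 hρ (by rw [map_smul, ha]) hσf ?_
  simp only [map_smul, ← smul_sub]
  rw [hneg_six, inv_smul_smul₀ (neg_ne_zero.2 h6)]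

variable {β : LinearMap.BilinForm K W}

lemma mem_periods_of_forall_mem_relations (hσ : σ ^ 4 = 1) (hρ : ρ ^ 3 = 1)
    (hβ : β.SeparatingLeft) (hβσ : ∀ x y, β (σ x) (σ y) = β x y)
    (hβρ : ∀ x y, β (ρ x) (ρ y) = β x y) {f : W} (hf : ∀ e ∈ relations σ ρ, β f e = 0) :
    f ∈ periods σ ρ := by
  refine mem_periods.2 ⟨?_, hβ _ fun e => ?_⟩
  · have hσf : σ f + f = 0 := hβ _ fun e => by
      have h := hf _ (Submodule.mem_sup_left ⟨σ (σ (σ e)), rfl⟩)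
      rwa [LinearMap.add_apply, Module.End.one_apply, apply_four_of_pow_four_eq_one hσ, map_add,
        ← hβσ, apply_four_of_pow_four_eq_one hσ, ← LinearMap.add_apply, ← map_add] at h
    exact eq_neg_of_add_eq_zero_left hσf
  · have h := hf _ (Submodule.mem_sup_right ⟨e, rfl⟩)
    have h₁ : β (ρ (ρ f)) e = β f (ρ e) := by
      rw [← hβρ f, ← hβρ (ρ f), apply_three_of_pow_three_eq_one hρ]
    have h₂ : β (ρ f) e = β f (ρ (ρ e)) := by
      rw [← hβρ f, apply_three_of_pow_three_eq_one hρ]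
    simp only [pow_two, LinearMap.add_apply, Module.End.one_apply, Module.End.mul_apply,
      map_add] at h ⊢
    linear_combination h + h₁ + h₂

lemma apply_sub_eq_neg_apply_sub (hρ : ρ ^ 3 = 1) (hβ : β.IsSymm)
    (hβρ : ∀ x y, β (ρ x) (ρ y) = β x y) (e f : W) :
    β e (ρ (ρ f) - ρ f) = -β f (ρ (ρ e) - ρ e) := by
  have h (x y : W) : β x (ρ (ρ y)) = β y (ρ x) := by
    rw [← hβρ, apply_three_of_pow_three_eq_one hρ, hβ.eq]
  rw [map_sub, map_sub, h e f, h f e, neg_sub]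

lemma apply_sub_eq_zero_of_mem_boundary (hρ : ρ ^ 3 = 1)
    (hβσ : ∀ x y, β (σ x) (σ y) = β x y) (hβρ : ∀ x y, β (ρ x) (ρ y) = β x y)
    {f h : W} (hf : f ∈ periods σ ρ) (hh : h ∈ boundary σ ρ) :
    β h (ρ (ρ f) - ρ f) = 0 := by
  obtain ⟨g, -, hg, rfl⟩ := mem_boundary.1 hh
  obtain ⟨hσf, hρf⟩ := mem_periods.1 hf
  have h₁ : β (ρ g) (ρ (ρ f)) = β g (ρ f) := hβρ _ _
  have h₂ : β (ρ g) (ρ f) = β g f := hβρ _ _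
  have h₃ : β g f = -β (ρ g) f := by rw [← hβσ, hσf, ← hg, map_neg]
  have h₄ : β (ρ g) f = β g (ρ (ρ f)) := by
    rw [← hβρ g, apply_three_of_pow_three_eq_one hρ]
  have h₅ : β g f + β g (ρ f) + β g (ρ (ρ f)) = 0 := by
    rw [← map_add, ← map_add, hρf, map_zero]
  rw [← hg, LinearMap.map_sub₂, map_sub, map_sub, h₁, h₂]
  linear_combination (-2) * h₅ + 3 * h₃ - 3 * h₄

end PeriodRelations

section QuadraticForms

variable {K : Type*} [Field K]

/-- The substitution `P(x, y) ↦ P(ax + by, cx + dy)` for `γ = !![a, b; c, d]`, where the vector `p`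
stands for the binary quadratic form `p 0 * x ^ 2 + p 1 * x * y + p 2 * y ^ 2`. -/
def quadSubst (γ : Matrix (Fin 2) (Fin 2) K) : Module.End K (Fin 3 → K) :=
  Matrix.mulVecLin
    !![γ 0 0 ^ 2, γ 0 0 * γ 1 0, γ 1 0 ^ 2;
      2 * γ 0 0 * γ 0 1, γ 0 0 * γ 1 1 + γ 0 1 * γ 1 0, 2 * γ 1 0 * γ 1 1;
      γ 0 1 ^ 2, γ 0 1 * γ 1 1, γ 1 1 ^ 2]

/-- The apolar pairing of binary quadratic forms, normalised so that `x ^ 2` and `y ^ 2` pair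
to `1`. -/
def apolar : LinearMap.BilinForm K (Fin 3 → K) :=
  Matrix.toBilin' !![0, 0, 1; 0, -2⁻¹, 0; 1, 0, 0]

lemma quadSubst_mul (γ δ : Matrix (Fin 2) (Fin 2) K) :
    quadSubst δ * quadSubst γ = quadSubst (γ * δ) := by
  rw [quadSubst, quadSubst, quadSubst, Module.End.mul_eq_comp, ← Matrix.mulVecLin_mul]
  congr 1
  ext i j
  fin_cases i <;> fin_cases j <;> simp [Matrix.mul_apply, Fin.sum_univ_succ] <;> ring

lemma quadSubst_one : quadSubst (1 : Matrix (Fin 2) (Fin 2) K) = 1 := by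
  rw [quadSubst, Module.End.one_eq_id, ← Matrix.mulVecLin_one]
  congr 1
  ext i j
  fin_cases i <;> fin_cases j <;> simp

lemma quadSubst_neg (γ : Matrix (Fin 2) (Fin 2) K) : quadSubst (-γ) = quadSubst γ := by
  simp [quadSubst]

lemma quadSubst_pow (γ : Matrix (Fin 2) (Fin 2) K) (n : ℕ) :
    quadSubst γ ^ n = quadSubst (γ ^ n) := by
  induction n with
  | zero => rw [pow_zero, pow_zero, quadSubst_one]
  | succ n ih => rw [pow_succ, ih, quadSubst_mul, pow_succ']

lemma apolar_apply (p q : Fin 3 → K) :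
    apolar p q = p 0 * q 2 + p 2 * q 0 - p 1 * q 1 / 2 := by
  rw [apolar, Matrix.toBilin'_apply]
  simp only [Fin.sum_univ_three, Matrix.of_apply, Matrix.cons_val', Matrix.cons_val]
  ring

lemma apolar_comm (p q : Fin 3 → K) : apolar p q = apolar q p := by
  rw [apolar_apply, apolar_apply]
  ring

lemma apolar_separatingLeft (h2 : (2 : K) ≠ 0) : (apolar (K := K)).SeparatingLeft := by
  intro p hp
  have h (i : Fin 3) := hp (Pi.single i 1)
  simp only [apolar_apply] at h
  ext i
  fin_cases i
  · simpa using h 2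
  · simpa [h2] using h 1
  · simpa using h 0

lemma apolar_quadSubst (h2 : (2 : K) ≠ 0) (γ : Matrix (Fin 2) (Fin 2) K) (p q : Fin 3 → K) :
    apolar (quadSubst γ p) (quadSubst γ q) = γ.det ^ 2 * apolar p q := by
  simp only [apolar_apply, quadSubst, Matrix.mulVecLin_apply, Matrix.mulVec, dotProduct,
    Fin.sum_univ_three, Matrix.det_fin_two]
  simp only [Matrix.of_apply, Matrix.cons_val', Matrix.cons_val_zero,
    Matrix.cons_val_fin_one, Matrix.cons_val_one, Matrix.cons_val]
  field_simp
  ring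

end QuadraticForms

section TwistedPermutations

variable {K P X : Type*} [Field K] [AddCommGroup P] [Module K P]

/-- The operator `e ↦ A ∘ e ∘ s` on functions `e : X → P`. -/
def twist (s : Equiv.Perm X) (A : Module.End K P) : Module.End K (X → P) :=
  A.compLeft X ∘ₗ LinearMap.funLeft K P s

lemma twist_apply (s : Equiv.Perm X) (A : Module.End K P) (e : X → P) (z : X) :
    twist s A e z = A (e (s z)) :=
  rfl

lemma twist_mul (s t : Equiv.Perm X) (A B : Module.End K P) :
    twist s A * twist t B = twist (t * s) (A * B) :=
  rfl

lemma twist_one_one : twist (1 : Equiv.Perm X) (1 : Module.End K P) = 1 :=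
  rfl

lemma twist_pow (s : Equiv.Perm X) (A : Module.End K P) (n : ℕ) :
    twist s A ^ n = twist (s ^ n) (A ^ n) := by
  induction n with
  | zero => simp only [pow_zero, twist_one_one]
  | succ n ih => rw [pow_succ, ih, twist_mul, ← pow_succ', ← pow_succ]

lemma twist_single [DecidableEq X] (s : Equiv.Perm X) (A : Module.End K P) (z : X) (p : P) :
    twist s A (Pi.single z p) = Pi.single (s⁻¹ z) (A p) := by
  ext x
  rw [twist_apply, Pi.single_apply, Pi.single_apply]
  simp only [Equiv.Perm.eq_inv_iff_eq, apply_ite A, map_zero]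

variable [Fintype X]

/-- The orthogonal sum over `X` of copies of a bilinear form. -/
def sumForm (X : Type*) [Fintype X] (b : LinearMap.BilinForm K P) :
    LinearMap.BilinForm K (X → P) :=
  ∑ z : X, b.compl₁₂ (LinearMap.proj z) (LinearMap.proj z)

variable {b : LinearMap.BilinForm K P}

lemma sumForm_apply (e f : X → P) : sumForm X b e f = ∑ z, b (e z) (f z) := by
  simp [sumForm]

lemma sumForm_single [DecidableEq X] (e : X → P) (z : X) (p : P) :
    sumForm X b e (Pi.single z p) = b (e z) p := by
  rw [sumForm_apply, Finset.sum_eq_single z]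
  · rw [Pi.single_eq_same]
  · intro x _ hx
    rw [Pi.single_eq_of_ne hx, map_zero]
  · simp

lemma sumForm_isSymm (hb : ∀ p q, b p q = b q p) : (sumForm X b).IsSymm :=
  ⟨fun e f => by simp only [sumForm_apply, hb]⟩

lemma sumForm_separatingLeft (hb : b.SeparatingLeft) : (sumForm X b).SeparatingLeft := by
  classical
  intro e he
  funext z
  exact hb _ fun p => by rw [← sumForm_single, he]

lemma sumForm_twist (s : Equiv.Perm X) {A : Module.End K P} (hA : ∀ p q, b (A p) (A q) = b p q)
    (e f : X → P) : sumForm X b (twist s A e) (twist s A f) = sumForm X b e f := by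
  simp only [sumForm_apply, twist_apply, hA]
  exact Equiv.sum_comp s fun z => b (e z) (f z)

end TwistedPermutations

section PrimitivePairs

variable {l : ℕ} [NeZero l]

lemma copr_iff_isCoprime {u v : ZMod l} : copr l u v ↔ IsCoprime u v := by
  have hunit : copr l u v ↔ IsUnit ((Nat.gcd u.val v.val : ℕ) : ZMod l) :=
    (ZMod.isUnit_iff_coprime _ _).symm
  have hdvd {n : ℕ} {w : ZMod l} (h : n ∣ w.val) : (n : ZMod l) ∣ w := by
    simpa using map_dvd (Nat.castRingHom (ZMod l)) h
  rw [hunit]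
  refine ⟨fun h => ?_, fun h =>
    h.isUnit_of_dvd' (hdvd (Nat.gcd_dvd_left _ _)) (hdvd (Nat.gcd_dvd_right _ _))⟩
  obtain ⟨c, hc⟩ := h.exists_left_inv
  have hbezout := congrArg (Int.cast : ℤ → ZMod l) (Nat.gcd_eq_gcd_ab u.val v.val)
  simp only [Int.cast_natCast, Int.cast_add, Int.cast_mul, ZMod.natCast_zmod_val] at hbezout
  exact ⟨c * Nat.gcdA u.val v.val, c * Nat.gcdB u.val v.val,
    by linear_combination hc - c * hbezout⟩

lemma copr_swap_neg {u v : ZMod l} : copr l v (-u) ↔ copr l u v := by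
  rw [copr_iff_isCoprime, copr_iff_isCoprime, IsCoprime.neg_right_iff, isCoprime_comm]

lemma copr_neg_swap {u v : ZMod l} : copr l (-v) u ↔ copr l u v := by
  rw [copr_iff_isCoprime, copr_iff_isCoprime, IsCoprime.neg_left_iff, isCoprime_comm]

lemma copr_right_neg_sub {u v : ZMod l} : copr l v (-u - v) ↔ copr l u v := by
  rw [copr_iff_isCoprime, copr_iff_isCoprime, ← neg_add', IsCoprime.neg_right_iff, isCoprime_comm]
  simpa using IsCoprime.add_mul_left_left_iff (x := u) (y := v) (z := 1)

lemma copr_neg_sub_left {u v : ZMod l} : copr l (-u - v) u ↔ copr l u v := by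
  rw [copr_iff_isCoprime, copr_iff_isCoprime, ← neg_add', IsCoprime.neg_left_iff, isCoprime_comm]
  simpa [add_comm] using IsCoprime.add_mul_left_right_iff (x := u) (y := v) (z := 1)

/-- The pairs `(u, v)` in `(ℤ/lℤ)²` with `gcd(u, v, l) = 1`. -/
abbrev PrimPair (l : ℕ) := {z : ZMod l × ZMod l // copr l z.1 z.2}

/-- The permutation `(u, v) ↦ (-v, u)` of order `4`. -/
def permS : Equiv.Perm (PrimPair l) where
  toFun z := ⟨(-z.1.2, z.1.1), copr_neg_swap.2 z.2⟩
  invFun z := ⟨(z.1.2, -z.1.1), copr_swap_neg.2 z.2⟩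
  left_inv z := by simp
  right_inv z := by simp

/-- The permutation `(u, v) ↦ (-u - v, u)` of order `3`. -/
def permR : Equiv.Perm (PrimPair l) where
  toFun z := ⟨(-z.1.1 - z.1.2, z.1.1), copr_neg_sub_left.2 z.2⟩
  invFun z := ⟨(z.1.2, -z.1.1 - z.1.2), copr_right_neg_sub.2 z.2⟩
  left_inv z := by ext <;> ring
  right_inv z := by ext <;> ring

lemma coe_permS (z : PrimPair l) : (permS z : ZMod l × ZMod l) = (-z.1.2, z.1.1) :=
  rfl

lemma coe_permS_inv (z : PrimPair l) : (permS⁻¹ z : ZMod l × ZMod l) = (z.1.2, -z.1.1) :=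
  rfl

lemma coe_permR (z : PrimPair l) : (permR z : ZMod l × ZMod l) = (-z.1.1 - z.1.2, z.1.1) :=
  rfl

lemma coe_permR_inv (z : PrimPair l) :
    (permR⁻¹ z : ZMod l × ZMod l) = (z.1.2, -z.1.1 - z.1.2) :=
  rfl

lemma permS_pow_four : (permS : Equiv.Perm (PrimPair l)) ^ 4 = 1 := by
  ext z <;> simp [pow_succ, coe_permS]

lemma permR_pow_three : (permR : Equiv.Perm (PrimPair l)) ^ 3 = 1 := by
  ext z <;> simp only [pow_succ, pow_zero, one_mul, Equiv.Perm.mul_apply, Equiv.Perm.one_apply,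
    coe_permR] <;> ring

lemma permR_inv_permR_inv (z : PrimPair l) : permR⁻¹ (permR⁻¹ z) = permR z := by
  rw [Equiv.Perm.inv_eq_iff_eq, Equiv.Perm.inv_eq_iff_eq]
  exact (Equiv.congr_fun permR_pow_three z).symm

lemma commute_permS_sq_permR : Commute ((permS : Equiv.Perm (PrimPair l)) ^ 2) permR := by
  ext z <;> simp only [pow_two, Equiv.Perm.mul_apply, coe_permR, coe_permS]
  ring

lemma sum_primPair {N : Type*} [AddCommMonoid N] {F : ZMod l → ZMod l → N}
    (hF : ∀ u v, ¬ copr l u v → F u v = 0) :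
    ∑ z : PrimPair l, F z.1.1 z.1.2 = ∑ u, ∑ v, F u v := by
  rw [← Fintype.sum_prod_type', ← Finset.sum_filter_of_ne
    (p := fun z : ZMod l × ZMod l => copr l z.1 z.2) fun z _ => not_imp_comm.1 (hF z.1 z.2)]
  exact (Finset.sum_subtype _ (by simp) fun z : ZMod l × ZMod l => F z.1 z.2).symm

end PrimitivePairs

section CoefficientSpace

/-- The symbols of level `l` with coprime indices: `e z` is the form with coefficients of `x²(u,v)`,
`xy(u,v)`, `y²(u,v)` at `z = (u, v)`, in this order. -/
abbrev Coeff (l : ℕ) := PrimPair l → Fin 3 → ℂ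

variable {l : ℕ} [NeZero l]

/-- The action of the generator of order `4` of the modular group on `Coeff l`. -/
noncomputable def opS : Module.End ℂ (Coeff l) :=
  twist permS (quadSubst !![0, -1; 1, 0])

/-- The action of the generator of order `3` of the modular group on `Coeff l`. -/
noncomputable def opR : Module.End ℂ (Coeff l) :=
  twist permR (quadSubst !![0, -1; 1, -1])

lemma quadSubst_zero_neg_one_one_zero (p : Fin 3 → ℂ) :
    quadSubst !![0, -1; 1, 0] p = ![p 2, -p 1, p 0] := by
  ext i
  fin_cases i <;> simp [quadSubst, Matrix.mulVec, dotProduct, Fin.sum_univ_three]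

lemma quadSubst_zero_neg_one_one_neg_one (p : Fin 3 → ℂ) :
    quadSubst !![0, -1; 1, -1] p = ![p 2, -p 1 - 2 * p 2, p 0 + p 1 + p 2] := by
  ext i
  fin_cases i <;> simp [quadSubst, Matrix.mulVec, dotProduct, Fin.sum_univ_three, sub_eq_add_neg]

lemma opS_apply (e : Coeff l) (z : PrimPair l) :
    opS e z = ![e (permS z) 2, -e (permS z) 1, e (permS z) 0] := by
  rw [opS, twist_apply, quadSubst_zero_neg_one_one_zero]

lemma opR_apply (e : Coeff l) (z : PrimPair l) :
    opR e z = ![e (permR z) 2, -e (permR z) 1 - 2 * e (permR z) 2,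
      e (permR z) 0 + e (permR z) 1 + e (permR z) 2] := by
  rw [opR, twist_apply, quadSubst_zero_neg_one_one_neg_one]

lemma opS_opS_apply (e : Coeff l) (z : PrimPair l) : opS (opS e) z = e (permS (permS z)) := by
  rw [opS_apply, opS_apply]
  ext i
  fin_cases i <;> simp

lemma opR_opR_apply (e : Coeff l) (z : PrimPair l) :
    opR (opR e) z = ![e (permR (permR z)) 0 + e (permR (permR z)) 1 + e (permR (permR z)) 2,
      -2 * e (permR (permR z)) 0 - e (permR (permR z)) 1, e (permR (permR z)) 0] := by
  rw [opR_apply, opR_apply]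
  ext i
  fin_cases i <;> simp only [Fin.zero_eta, Fin.mk_one, Fin.reduceFinMk, Matrix.cons_val] <;> ring

lemma opS_opR_opS_apply (e : Coeff l) (z : PrimPair l) :
    opS (opR (opS e)) z = ![e (permS (permR (permS z))) 0 - e (permS (permR (permS z))) 1
        + e (permS (permR (permS z))) 2,
      2 * e (permS (permR (permS z))) 0 - e (permS (permR (permS z))) 1,
      e (permS (permR (permS z))) 0] := by
  rw [opS_apply, opR_apply, opS_apply]
  ext i
  fin_cases i <;> simp only [Fin.zero_eta, Fin.mk_one, Fin.reduceFinMk, Matrix.cons_val] <;> ring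

lemma opS_single (z : PrimPair l) (p : Fin 3 → ℂ) :
    opS (Pi.single z p) = Pi.single (permS⁻¹ z) ![p 2, -p 1, p 0] := by
  rw [opS, twist_single, quadSubst_zero_neg_one_one_zero]

lemma opR_single (z : PrimPair l) (p : Fin 3 → ℂ) :
    opR (Pi.single z p) =
      Pi.single (permR⁻¹ z) ![p 2, -p 1 - 2 * p 2, p 0 + p 1 + p 2] := by
  rw [opR, twist_single, quadSubst_zero_neg_one_one_neg_one]

lemma opS_pow_four : (opS : Module.End ℂ (Coeff l)) ^ 4 = 1 := by
  have h : (!![0, -1; 1, 0] : Matrix (Fin 2) (Fin 2) ℂ) ^ 4 = 1 := by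
    ext i j
    fin_cases i <;> fin_cases j <;> simp [pow_succ]
  rw [opS, twist_pow, permS_pow_four, quadSubst_pow, h, quadSubst_one, twist_one_one]

lemma opR_pow_three : (opR : Module.End ℂ (Coeff l)) ^ 3 = 1 := by
  have h : (!![0, -1; 1, -1] : Matrix (Fin 2) (Fin 2) ℂ) ^ 3 = 1 := by
    ext i j
    fin_cases i <;> fin_cases j <;> simp [pow_succ]
  rw [opR, twist_pow, permR_pow_three, quadSubst_pow, h, quadSubst_one, twist_one_one]

lemma commute_opS_sq_opR : Commute ((opS : Module.End ℂ (Coeff l)) ^ 2) opR := by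
  have h : (!![0, -1; 1, 0] : Matrix (Fin 2) (Fin 2) ℂ) ^ 2 = -1 := by
    ext i j
    fin_cases i <;> fin_cases j <;> simp [pow_succ]
  rw [opS, opR, twist_pow, quadSubst_pow, h, quadSubst_neg, quadSubst_one, Commute, SemiconjBy,
    twist_mul, twist_mul, commute_permS_sq_permR.eq, mul_one, one_mul]

/-- The pairing on `Coeff l` for which both operators are isometries. -/
noncomputable def pairing (l : ℕ) [NeZero l] : LinearMap.BilinForm ℂ (Coeff l) :=
  sumForm (PrimPair l) apolar

lemma pairing_apply (e f : Coeff l) :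
    pairing l e f = ∑ z, (e z 0 * f z 2 + e z 2 * f z 0 - e z 1 * f z 1 / 2) := by
  simp only [pairing, sumForm_apply, apolar_apply]

lemma pairing_isSymm : (pairing l).IsSymm :=
  sumForm_isSymm apolar_comm

lemma pairing_separatingLeft : (pairing l).SeparatingLeft :=
  sumForm_separatingLeft (apolar_separatingLeft two_ne_zero)

lemma pairing_opS (e f : Coeff l) : pairing l (opS e) (opS f) = pairing l e f :=
  sumForm_twist _ (fun p q => by simp [apolar_quadSubst]) _ _

lemma pairing_opR (e f : Coeff l) : pairing l (opR e) (opR f) = pairing l e f :=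
  sumForm_twist _ (fun p q => by simp [apolar_quadSubst]) _ _

end CoefficientSpace

section ModularSymbols

variable {l : ℕ}

lemma x2_add_y2 {u v : ZMod l} (h : copr l u v) : x2 l u v + y2 l v (-u) = 0 :=
  (Submodule.Quotient.mk_eq_zero _).2 <|
    Submodule.subset_span <| Or.inr ⟨u, v, h, Or.inl rfl⟩

lemma xy_sub_xy {u v : ZMod l} (h : copr l u v) : xy l u v - xy l v (-u) = 0 :=
  (Submodule.Quotient.mk_eq_zero _).2 <|
    Submodule.subset_span <| Or.inr ⟨u, v, h, Or.inr <| Or.inl rfl⟩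

lemma y2_add_x2 {u v : ZMod l} (h : copr l u v) : y2 l u v + x2 l v (-u) = 0 :=
  (Submodule.Quotient.mk_eq_zero _).2 <|
    Submodule.subset_span <| Or.inr ⟨u, v, h, Or.inr <| Or.inr <| Or.inl rfl⟩

lemma xy_sub_xy_add_y2_add_x2_sub_xy {u v : ZMod l} (h : copr l u v) :
    xy l v (-u - v) - xy l (-u - v) u + y2 l (-u - v) u + x2 l u v - xy l u v = 0 :=
  (Submodule.Quotient.mk_eq_zero _).2 <|
    Submodule.subset_span <| Or.inr ⟨u, v, h, Or.inr <| Or.inr <| Or.inr rfl⟩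

lemma mkQ_single_of_not_copr (i : Fin 3) {z : ZMod l × ZMod l} (hz : ¬ copr l z.1 z.2) :
    (Rel l).mkQ (Finsupp.single (i, z) 1) = 0 := by
  rw [Submodule.mkQ_apply, Submodule.Quotient.mk_eq_zero]
  refine Submodule.subset_span (Or.inl ⟨z.1, z.2, hz, ?_⟩)
  fin_cases i <;> simp [X2, XY, Y2]

/-- The coefficients of an element of the free space at the symbols with coprime indices. -/
noncomputable def coeff (l : ℕ) : V l →ₗ[ℂ] Coeff l :=
  LinearMap.pi fun z => LinearMap.pi fun i => Finsupp.lapply (i, (z : ZMod l × ZMod l))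

/-- The class `P(u,v)` in `M l` of a form `P` and a pair `z = (u, v)`, as a function of `P`. -/
noncomputable def symbolAt (z : PrimPair l) : (Fin 3 → ℂ) →ₗ[ℂ] M l :=
  Fintype.linearCombination ℂ
    fun i => (Rel l).mkQ (Finsupp.single (i, (z : ZMod l × ZMod l)) 1)

lemma coeff_single (i : Fin 3) (z : PrimPair l) :
    coeff l (Finsupp.single (i, (z : ZMod l × ZMod l)) 1) = Pi.single z (Pi.single i 1) := by
  ext x j
  by_cases hx : x = z
  · subst hx
    simp [coeff, Finsupp.single_apply, Pi.single_apply, eq_comm]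
  · have hne : (z : ZMod l × ZMod l) ≠ x := fun h => hx (Subtype.ext h.symm)
    simp [coeff, hx, hne]

lemma coeff_single_of_not_copr (i : Fin 3) {z : ZMod l × ZMod l} (hz : ¬ copr l z.1 z.2) :
    coeff l (Finsupp.single (i, z) 1) = 0 := by
  ext x j
  have hne : (i, z) ≠ (j, (x : ZMod l × ZMod l)) := by
    rintro ⟨⟩
    exact hz x.2
  simp [coeff, hne]

lemma coeff_X2 (z : PrimPair l) : coeff l (X2 l z.1.1 z.1.2) = Pi.single z ![1, 0, 0] := by
  rw [X2, coeff_single]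
  congr 1
  ext i
  fin_cases i <;> rfl

lemma coeff_XY (z : PrimPair l) : coeff l (XY l z.1.1 z.1.2) = Pi.single z ![0, 1, 0] := by
  rw [XY, coeff_single]
  congr 1
  ext i
  fin_cases i <;> rfl

lemma coeff_Y2 (z : PrimPair l) : coeff l (Y2 l z.1.1 z.1.2) = Pi.single z ![0, 0, 1] := by
  rw [Y2, coeff_single]
  congr 1
  ext i
  fin_cases i <;> rfl

lemma symbolAt_apply (z : PrimPair l) (p : Fin 3 → ℂ) :
    symbolAt z p = pcl l (p 0) (p 1) (p 2) z.1.1 z.1.2 := by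
  rw [symbolAt, Fintype.linearCombination_apply, Fin.sum_univ_three]
  rfl

variable [NeZero l]

lemma coeff_surjective : Function.Surjective (coeff l) := by
  refine fun e => ⟨Finsupp.equivFunOnFinite.symm fun p =>
    if h : copr l p.2.1 p.2.2 then e ⟨p.2, h⟩ p.1 else 0, ?_⟩
  ext z i
  exact dif_pos z.2

/-- The modular symbol with given coefficients. -/
noncomputable def symbolClass (l : ℕ) [NeZero l] : Coeff l →ₗ[ℂ] M l :=
  ∑ z, symbolAt z ∘ₗ LinearMap.proj z

lemma symbolClass_apply (e : Coeff l) : symbolClass l e = ∑ z, symbolAt z (e z) := by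
  simp [symbolClass]

lemma symbolClass_single (z : PrimPair l) (p : Fin 3 → ℂ) :
    symbolClass l (Pi.single z p) = symbolAt z p := by
  rw [symbolClass_apply, Finset.sum_eq_single z]
  · rw [Pi.single_eq_same]
  · intro x _ hx
    rw [Pi.single_eq_of_ne hx, map_zero]
  · simp

lemma symbolClass_comp_coeff : symbolClass l ∘ₗ coeff l = (Rel l).mkQ := by
  refine Finsupp.lhom_ext' fun ⟨i, z⟩ => LinearMap.ext_ring ?_
  change symbolClass l (coeff l (Finsupp.single (i, z) 1)) = (Rel l).mkQ (Finsupp.single (i, z) 1)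
  by_cases hz : copr l z.1 z.2
  · rw [coeff_single i ⟨z, hz⟩, symbolClass_single, symbolAt,
      Fintype.linearCombination_apply_single, one_smul]
  · rw [coeff_single_of_not_copr i hz, mkQ_single_of_not_copr i hz, map_zero]

lemma symbolClass_add_opS (e : Coeff l) : symbolClass l (e + opS e) = 0 := by
  suffices h : symbolClass l ∘ₗ (1 + opS) = 0 from LinearMap.congr_fun h e
  refine LinearMap.pi_ext fun z p => ?_
  change symbolClass l (Pi.single z p + opS (Pi.single z p)) = 0
  rw [opS_single, map_add, symbolClass_single, symbolClass_single, symbolAt_apply, symbolAt_apply,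
    coe_permS_inv]
  simp only [pcl, Matrix.cons_val]
  linear_combination (norm := module)
    p 0 • x2_add_y2 z.2 + p 1 • xy_sub_xy z.2 + p 2 • y2_add_x2 z.2

lemma symbolClass_add_opR_add_opR_opR (e : Coeff l) :
    symbolClass l (e + opR e + opR (opR e)) = 0 := by
  suffices h : symbolClass l ∘ₗ (1 + opR + opR * opR) = 0 from LinearMap.congr_fun h e
  refine LinearMap.pi_ext fun z p => ?_
  change symbolClass l (Pi.single z p + opR (Pi.single z p) + opR (opR (Pi.single z p))) = 0
  have h₀ := xy_sub_xy_add_y2_add_x2_sub_xy z.2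
  have h₁ := xy_sub_xy_add_y2_add_x2_sub_xy (permR z).2
  have h₂ := xy_sub_xy_add_y2_add_x2_sub_xy (permR⁻¹ z).2
  have hv : -z.1.2 - (-z.1.1 - z.1.2) = z.1.1 := by ring
  have hv' : -(-z.1.1 - z.1.2) - z.1.1 = z.1.2 := by ring
  simp only [coe_permR, coe_permR_inv, hv, hv'] at h₁ h₂
  simp only [opR_single, map_add, symbolClass_single, symbolAt_apply, coe_permR_inv, hv]
  simp only [pcl, Matrix.cons_val]
  linear_combination (norm := module)
    p 0 • h₀ + (p 0 + p 1 + p 2) • h₁ + p 2 • h₂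

lemma relations_le_ker_symbolClass : relations opS opR ≤ LinearMap.ker (symbolClass l) := by
  refine sup_le ?_ ?_
  · rintro _ ⟨e, rfl⟩
    exact symbolClass_add_opS e
  · rintro _ ⟨e, rfl⟩
    exact symbolClass_add_opR_add_opR_opR e

lemma single_add_single_mem_relations (z : PrimPair l) (p : Fin 3 → ℂ) :
    Pi.single z p + Pi.single (permS⁻¹ z) ![p 2, -p 1, p 0] ∈ relations opS opR := by
  rw [← opS_single]
  exact Submodule.mem_sup_left ⟨Pi.single z p, rfl⟩

lemma single_add_single_add_single_mem_relations (z : PrimPair l) :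
    Pi.single z ![1, -1, 0] + Pi.single (permR⁻¹ z) ![0, 1, 0] + Pi.single (permR z) ![0, -1, 1] ∈
      relations opS opR := by
  have hR : opR (Pi.single z ![1, -1, 0]) = Pi.single (permR⁻¹ z) ![0, 1, 0] := by
    simp [opR_single]
  have hRR : opR (Pi.single (permR⁻¹ z) ![0, 1, 0]) = Pi.single (permR z) ![0, -1, 1] := by
    rw [opR_single, permR_inv_permR_inv]
    simp
  rw [← hRR, ← hR]
  exact Submodule.mem_sup_right ⟨Pi.single z ![1, -1, 0], rfl⟩

lemma coeff_mem_relations {w : V l} (hw : w ∈ Rel l) : coeff l w ∈ relations opS opR := by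
  suffices h : Rel l ≤ (relations opS opR).comap (coeff l) from h hw
  refine Submodule.span_le.2 (Set.union_subset ?_ ?_)
  · rintro w ⟨u, v, huv, hw⟩
    have hzero (i : Fin 3) : coeff l (Finsupp.single (i, u, v) 1) ∈ relations opS opR := by
      rw [coeff_single_of_not_copr i huv]
      exact zero_mem _
    obtain rfl | rfl | rfl := hw
    exacts [hzero 0, hzero 1, hzero 2]
  · rintro w ⟨u, v, huv, hw⟩
    let z : PrimPair l := ⟨(u, v), huv⟩
    rw [SetLike.mem_coe, Submodule.mem_comap]
    obtain rfl | rfl | rfl | rfl := hw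
    · change coeff l (X2 l z.1.1 z.1.2 + Y2 l (permS⁻¹ z).1.1 (permS⁻¹ z).1.2) ∈ _
      rw [map_add, coeff_X2, coeff_Y2]
      simpa using single_add_single_mem_relations z ![1, 0, 0]
    · change coeff l (XY l z.1.1 z.1.2 - XY l (permS⁻¹ z).1.1 (permS⁻¹ z).1.2) ∈ _
      rw [map_sub, coeff_XY, coeff_XY, sub_eq_add_neg, ← Pi.single_neg]
      simpa using single_add_single_mem_relations z ![0, 1, 0]
    · change coeff l (Y2 l z.1.1 z.1.2 + X2 l (permS⁻¹ z).1.1 (permS⁻¹ z).1.2) ∈ _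
      rw [map_add, coeff_Y2, coeff_X2]
      simpa using single_add_single_mem_relations z ![0, 0, 1]
    · change coeff l (XY l (permR⁻¹ z).1.1 (permR⁻¹ z).1.2 - XY l (permR z).1.1 (permR z).1.2
        + Y2 l (permR z).1.1 (permR z).1.2 + X2 l z.1.1 z.1.2 - XY l z.1.1 z.1.2) ∈ _
      simp only [map_sub, map_add, coeff_X2, coeff_XY, coeff_Y2]
      convert single_add_single_add_single_mem_relations z using 1
      have h₁ : (![1, -1, 0] : Fin 3 → ℂ) = ![1, 0, 0] - ![0, 1, 0] := by simp
      have h₂ : (![0, -1, 1] : Fin 3 → ℂ) = ![0, 0, 1] - ![0, 1, 0] := by simp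
      rw [h₁, h₂, Pi.single_sub, Pi.single_sub]
      abel

lemma ker_symbolClass : LinearMap.ker (symbolClass l) = relations opS opR := by
  refine le_antisymm (fun e he => ?_) relations_le_ker_symbolClass
  obtain ⟨w, rfl⟩ := coeff_surjective e
  refine coeff_mem_relations ?_
  rwa [LinearMap.mem_ker, ← LinearMap.comp_apply, symbolClass_comp_coeff, Submodule.mkQ_apply,
    Submodule.Quotient.mk_eq_zero] at he

end ModularSymbols

section PoincareDuality

variable {l : ℕ}

/-- The vector representing a functional on `M l` with respect to `pairing l`. -/
noncomputable def dualVec (l : ℕ) : Module.Dual ℂ (M l) →ₗ[ℂ] Coeff l where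
  toFun φ z := ![φ (y2 l z.1.1 z.1.2), -2 * φ (xy l z.1.1 z.1.2), φ (x2 l z.1.1 z.1.2)]
  map_add' φ ψ := by
    ext z i
    fin_cases i <;> simp [mul_add]
  map_smul' c φ := by
    ext z i
    fin_cases i <;> simp [mul_left_comm]

lemma dualVec_apply (φ : Module.Dual ℂ (M l)) (z : PrimPair l) :
    dualVec l φ z = ![φ (y2 l z.1.1 z.1.2), -2 * φ (xy l z.1.1 z.1.2), φ (x2 l z.1.1 z.1.2)] :=
  rfl

variable [NeZero l]

lemma pairing_dualVec (φ : Module.Dual ℂ (M l)) (e : Coeff l) :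
    pairing l (dualVec l φ) e = φ (symbolClass l e) := by
  rw [pairing_apply, symbolClass_apply, map_sum]
  refine Finset.sum_congr rfl fun z _ => ?_
  simp only [dualVec_apply, symbolAt_apply, pcl, map_add, map_smul, smul_eq_mul, Matrix.cons_val]
  ring

lemma dualVec_mem_periods (φ : Module.Dual ℂ (M l)) : dualVec l φ ∈ periods opS opR := by
  refine mem_periods_of_forall_mem_relations opS_pow_four opR_pow_three pairing_separatingLeft
    pairing_opS pairing_opR fun e he => ?_
  rw [pairing_dualVec, LinearMap.mem_ker.1 (relations_le_ker_symbolClass he), map_zero]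

/-- The linear map underlying `PD l`. -/
noncomputable def dualityMap (l : ℕ) [NeZero l] : Module.Dual ℂ (M l) →ₗ[ℂ] M l :=
  (24 : ℂ)⁻¹ • symbolClass l ∘ₗ (opR * opR - opR) ∘ₗ dualVec l

lemma dualityMap_apply (φ : Module.Dual ℂ (M l)) :
    dualityMap l φ =
      (24 : ℂ)⁻¹ • symbolClass l (opR (opR (dualVec l φ)) - opR (dualVec l φ)) :=
  rfl

lemma PD_eq_sum_symbolAt (φ : Module.Dual ℂ (M l)) :
    PD l φ = (24 : ℂ)⁻¹ • ∑ z : PrimPair l, symbolAt z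
      (opR (opR (opS (opS (dualVec l φ)))) z - opS (opR (opS (dualVec l φ))) z) := by
  rw [PD, ← sum_primPair]
  · refine congrArg _ (Finset.sum_congr rfl fun z _ => ?_)
    have h₁ : (permS (permS (permR (permR z))) : ZMod l × ZMod l) = (-z.1.2, z.1.1 + z.1.2) := by
      ext <;> simp [coe_permS, coe_permR, add_comm]
    have h₂ : (permS (permR (permS z)) : ZMod l × ZMod l) = (z.1.2, z.1.2 - z.1.1) := by
      ext <;> simp [coe_permS, coe_permR]
    rw [opR_opR_apply, opS_opR_opS_apply, opS_opS_apply, dualVec_apply, dualVec_apply, h₁, h₂,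
      symbolAt_apply]
    simp only [pcl, map_add, map_sub, map_smul, smul_eq_mul, Pi.sub_apply, Matrix.cons_val]
    module
  · intro u v huv
    have hzero (i : Fin 3) : (Rel l).mkQ (Finsupp.single (i, u, v) 1) = 0 :=
      mkQ_single_of_not_copr i huv
    have hx2 : x2 l u v = 0 := hzero 0
    have hxy : xy l u v = 0 := hzero 1
    have hy2 : y2 l u v = 0 := hzero 2
    simp only [hx2, hxy, hy2, smul_zero, sub_zero, add_zero]

lemma PD_eq_dualityMap (φ : Module.Dual ℂ (M l)) : PD l φ = dualityMap l φ := by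
  have hS : opS (dualVec l φ) = -dualVec l φ := (mem_periods.1 (dualVec_mem_periods φ)).1
  have hSR : symbolClass l (opS (opR (dualVec l φ))) = -symbolClass l (opR (dualVec l φ)) := by
    rw [eq_neg_iff_add_eq_zero, add_comm, ← map_add, symbolClass_add_opS]
  calc PD l φ = (24 : ℂ)⁻¹ • symbolClass l
        (opR (opR (opS (opS (dualVec l φ)))) - opS (opR (opS (dualVec l φ)))) := by
        rw [PD_eq_sum_symbolAt, symbolClass_apply]
        rfl
    _ = (24 : ℂ)⁻¹ • symbolClass l (opR (opR (dualVec l φ)) + opS (opR (dualVec l φ))) := by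
        simp only [hS, map_neg, neg_neg, sub_neg_eq_add]
    _ = dualityMap l φ := by
        rw [dualityMap_apply, map_add, map_sub, hSR, sub_eq_add_neg]

lemma apply_dualityMap (φ ψ : Module.Dual ℂ (M l)) :
    φ (dualityMap l ψ) = -ψ (dualityMap l φ) := by
  rw [dualityMap_apply, dualityMap_apply, map_smul, map_smul, ← pairing_dualVec, ← pairing_dualVec,
    apply_sub_eq_neg_apply_sub opR_pow_three pairing_isSymm pairing_opR, smul_neg]

/-- The modular symbols whose coefficients are orthogonal to the boundary vectors. -/
noncomputable def cuspidal (l : ℕ) [NeZero l] : Submodule ℂ (M l) :=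
  ((pairing l).orthogonal (boundary opS opR)).map (symbolClass l)

lemma range_dualityMap_le : LinearMap.range (dualityMap l) ≤ cuspidal l := by
  rintro _ ⟨φ, rfl⟩
  rw [dualityMap_apply, ← map_smul]
  refine Submodule.mem_map_of_mem (Submodule.smul_mem _ _ fun h hh => ?_)
  exact apply_sub_eq_zero_of_mem_boundary opR_pow_three pairing_opS pairing_opR
    (dualVec_mem_periods φ) hh

lemma ker_dualityMap_le : LinearMap.ker (dualityMap l) ≤ (cuspidal l).dualAnnihilator := by
  intro φ hφ
  rw [LinearMap.mem_ker, dualityMap_apply, smul_eq_zero_iff_right (by norm_num),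
    ← LinearMap.mem_ker, ker_symbolClass] at hφ
  have hbdry : dualVec l φ ∈ boundary opS opR :=
    mem_boundary_of_mem_relations (by norm_num) opS_pow_four opR_pow_three commute_opS_sq_opR
      (dualVec_mem_periods φ) hφ
  rw [Submodule.mem_dualAnnihilator]
  rintro _ ⟨e, he, rfl⟩
  rw [← pairing_dualVec]
  exact he _ hbdry

end PoincareDuality

section FinitePermutation

variable {X A : Type*} [AddCommGroup A] {T : Equiv.Perm X} {F c : X → A}

lemma apply_pow_eq_add_nsmul (hF : ∀ x, F (T x) = F x + c x) (hc : ∀ x, c (T x) = c x) (n : ℕ)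
    (x : X) : F ((T ^ n) x) = F x + n • c x := by
  induction n generalizing x with
  | zero => simp
  | succ n ih => rw [pow_succ, Equiv.Perm.mul_apply, ih, hF, hc, succ_nsmul', add_assoc]

lemma eq_zero_of_apply_eq_add [Finite X] [IsAddTorsionFree A] (hF : ∀ x, F (T x) = F x + c x)
    (hc : ∀ x, c (T x) = c x) (x : X) : c x = 0 := by
  have h := apply_pow_eq_add_nsmul hF hc (orderOf T) x
  rw [pow_orderOf_eq_one, Equiv.Perm.one_apply, left_eq_add] at h
  exact (nsmul_eq_zero_iff_right (orderOf_pos T).ne').1 h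

end FinitePermutation

section Cusps

variable {l : ℕ}

/-- The pairs `(a, b)` indexing the functionals `psiV l a b`, without the condition that `b` be
invertible. -/
abbrev CuspDatum (l : ℕ) := Σ a : ZMod l, ZMod (Nat.gcd a.val l)

/-- The cusp datum `(a, b)` attached to the pair `(u, v)`: `a = v`, and `b` is the residue of `-u`
modulo `gcd(v, l)`. -/
noncomputable def cusp (z : PrimPair l) : CuspDatum l :=
  ⟨z.1.2, castg l z.1.2 (-z.1.1)⟩

lemma cusp_eq_mk_iff {z : PrimPair l} {a : ZMod l} {b : ZMod (Nat.gcd a.val l)} :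
    cusp z = ⟨a, b⟩ ↔ z.1.2 = a ∧ castg l a (-z.1.1) = b := by
  constructor
  · rintro ⟨⟩
    exact ⟨rfl, rfl⟩
  · rintro ⟨rfl, rfl⟩
    rfl

variable [NeZero l]

lemma castg_eq_zero_iff {a x : ZMod l} : castg l a x = 0 ↔ a ∣ x := by
  constructor
  · intro h
    rw [castg, ZMod.castHom_apply, ZMod.cast_eq_val, ZMod.natCast_eq_zero_iff] at h
    have hgcd : ((Nat.gcd a.val l : ℕ) : ZMod l) ∣ x := by
      simpa using map_dvd (Nat.castRingHom (ZMod l)) h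
    have hbezout := congrArg (Int.cast : ℤ → ZMod l) (Nat.gcd_eq_gcd_ab a.val l)
    simp only [Int.cast_natCast, Int.cast_add, Int.cast_mul, ZMod.natCast_zmod_val,
      CharP.cast_eq_zero, zero_mul, add_zero] at hbezout
    exact (Dvd.intro _ hbezout.symm).trans hgcd
  · rintro ⟨c, rfl⟩
    have ha : castg l a a = 0 := by
      rw [castg, ZMod.castHom_apply, ZMod.cast_eq_val, ZMod.natCast_eq_zero_iff]
      exact Nat.gcd_dvd_left _ _
    rw [map_mul, ha, zero_mul]

lemma isUnit_cusp_snd (z : PrimPair l) : IsUnit (cusp z).2 := by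
  obtain ⟨s, t, hst⟩ := copr_iff_isCoprime.1 z.2
  have h := congrArg (castg l z.1.2) hst
  rw [map_add, map_mul, castg_eq_zero_iff.2 (dvd_mul_left _ t), add_zero, map_one] at h
  change IsUnit (castg l z.1.2 (-z.1.1))
  rw [map_neg, IsUnit.neg_iff]
  exact IsUnit.of_mul_eq_one_right _ h

lemma cusp_permR (z : PrimPair l) : cusp (permR z) = cusp (permS z) := by
  have h : castg l z.1.1 (- -z.1.2) = castg l z.1.1 (-(-z.1.1 - z.1.2)) := by
    rw [← sub_eq_zero, ← map_sub, castg_eq_zero_iff]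
    exact ⟨-1, by ring⟩
  exact cusp_eq_mk_iff.2 ⟨rfl, h.symm⟩

lemma permS_permS_permR (z : PrimPair l) :
    permS (permS (permR z)) = permR (permS (permS z)) := by
  simpa [pow_two] using Equiv.congr_fun commute_permS_sq_permR.eq z

lemma permS_permS_permS_permS (z : PrimPair l) : permS (permS (permS (permS z))) = z := by
  simpa [pow_succ] using Equiv.congr_fun permS_pow_four z

/-- The parabolic permutation `(u, v) ↦ (u - v, v)`, whose orbits are the fibres of `cusp`. -/
def permT : Equiv.Perm (PrimPair l) :=
  permR * permS⁻¹

lemma coe_permT_pow (n : ℕ) (z : PrimPair l) :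
    ((permT ^ n) z : ZMod l × ZMod l) = (z.1.1 - n * z.1.2, z.1.2) := by
  induction n with
  | zero => simp
  | succ n ih =>
    rw [pow_succ', Equiv.Perm.mul_apply, permT, Equiv.Perm.mul_apply, coe_permR, coe_permS_inv,
      ← permT, ih]
    ext <;> push_cast <;> ring

lemma exists_permT_pow_eq_of_cusp_eq {z z' : PrimPair l} (h : cusp z = cusp z') :
    ∃ n : ℕ, (permT ^ n) z = z' := by
  obtain ⟨h₂, h₁⟩ := cusp_eq_mk_iff.1 h
  rw [← sub_eq_zero, ← map_sub, castg_eq_zero_iff] at h₁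
  obtain ⟨c, hc⟩ := h₁
  refine ⟨(-c).val, Subtype.ext ?_⟩
  rw [coe_permT_pow, ZMod.natCast_zmod_val]
  ext
  · linear_combination c * h₂ - hc
  · exact h₂

lemma apply_permT_of_opR_eq_opS {g : Coeff l} (hg : opR g = opS g) (z : PrimPair l) :
    g (permT z) 2 = g z 2 ∧ g (permT z) 1 = g z 1 - 2 * g z 2 ∧
      g (permT z) 0 = g z 0 - g z 1 + g z 2 := by
  have hS : permS (permS⁻¹ z) = z := permS.apply_symm_apply z
  have hT : permR (permS⁻¹ z) = permT z := rfl
  have h := congrFun hg (permS⁻¹ z)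
  rw [opR_apply, opS_apply, hS, hT] at h
  obtain ⟨h₂, h₁, h₀, -⟩ := by simpa only [Matrix.vecCons_inj] using h
  exact ⟨h₂, by linear_combination -h₁ - 2 * h₂, by linear_combination h₀ + h₁ + h₂⟩

lemma apply_two_eq_zero_of_opR_eq_opS {g : Coeff l} (hg : opR g = opS g) (z : PrimPair l) :
    g z 2 = 0 := by
  have h : -2 * g z 2 = 0 := by
    refine eq_zero_of_apply_eq_add (T := permT) (F := fun y => g y 1) (c := fun y => -2 * g y 2)
      (fun y => ?_) (fun y => ?_) z
    · linear_combination (apply_permT_of_opR_eq_opS hg y).2.1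
    · rw [(apply_permT_of_opR_eq_opS hg y).1]
  simpa using h

lemma apply_one_eq_zero_of_opR_eq_opS {g : Coeff l} (hg : opR g = opS g) (z : PrimPair l) :
    g z 1 = 0 := by
  have h₂ := apply_two_eq_zero_of_opR_eq_opS hg
  refine neg_eq_zero.1 (eq_zero_of_apply_eq_add (T := permT) (F := fun y => g y 0)
    (c := fun y => -g y 1) (fun y => ?_) (fun y => ?_) z)
  · linear_combination (apply_permT_of_opR_eq_opS hg y).2.2 + h₂ y
  · linear_combination -(apply_permT_of_opR_eq_opS hg y).2.1 + 2 * h₂ y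

lemma apply_zero_eq_of_cusp_eq {g : Coeff l} (hg : opR g = opS g) {z z' : PrimPair l}
    (h : cusp z = cusp z') : g z 0 = g z' 0 := by
  obtain ⟨n, rfl⟩ := exists_permT_pow_eq_of_cusp_eq h
  have hT (y : PrimPair l) : g (permT y) 0 = g y 0 := by
    linear_combination (apply_permT_of_opR_eq_opS hg y).2.2
      - apply_one_eq_zero_of_opR_eq_opS hg y + apply_two_eq_zero_of_opR_eq_opS hg y
  have hpow := apply_pow_eq_add_nsmul (T := permT) (F := fun y => g y 0) (c := 0)
    (by simpa using hT) (fun _ => rfl) n z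
  simpa using hpow.symm

/-- The even vector with coefficients of `x²` counting the pairs `±z` of cusp datum `k`. -/
noncomputable def cuspVec (k : CuspDatum l) : Coeff l :=
  fun z => ![(if cusp z = k then 1 else 0) + (if cusp (permS (permS z)) = k then 1 else 0), 0, 0]

lemma cuspVec_apply_zero (k : CuspDatum l) (z : PrimPair l) :
    cuspVec k z 0 =
      (if cusp z = k then 1 else 0) + (if cusp (permS (permS z)) = k then 1 else 0) :=
  rfl

lemma cuspVec_sub_opS_apply (k : CuspDatum l) (z : PrimPair l) :
    (cuspVec k - opS (cuspVec k)) z = ![cuspVec k z 0, 0, -cuspVec k (permS z) 0] := by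
  rw [Pi.sub_apply, opS_apply]
  ext i
  fin_cases i <;> simp [cuspVec]

lemma opS_opS_cuspVec (k : CuspDatum l) :
    opS (opS (cuspVec k)) = cuspVec k := by
  ext z : 1
  rw [opS_opS_apply, cuspVec, cuspVec, permS_permS_permS_permS, add_comm]

lemma opR_cuspVec (k : CuspDatum l) :
    opR (cuspVec k) = opS (cuspVec k) := by
  ext z : 1
  rw [opR_apply, opS_apply]
  simp [cuspVec, permS_permS_permR, cusp_permR]

lemma cuspVec_sub_opS_mem_boundary (k : CuspDatum l) :
    cuspVec k - opS (cuspVec k) ∈ boundary opS opR :=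
  mem_boundary.2 ⟨cuspVec k, opS_opS_cuspVec k, opR_cuspVec k, rfl⟩

lemma mem_span_cuspVec {g : Coeff l} (hg : opR g = opS g) (heven : opS (opS g) = g) :
    g ∈ Submodule.span ℂ (Set.range fun z : PrimPair l => cuspVec (cusp z)) := by
  let G := Function.extend cusp (fun z => g z 0) 0
  have hG (z : PrimPair l) : G (cusp z) = g z 0 :=
    Function.FactorsThrough.extend_apply
      (fun z z' h => apply_zero_eq_of_cusp_eq hg h : Function.FactorsThrough _ cusp) 0 z
  have hsum : g = ∑ k ∈ Finset.univ.image cusp, ((2 : ℂ)⁻¹ * G k) • cuspVec k := by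
    ext z i
    simp only [Finset.sum_apply, Pi.smul_apply, smul_eq_mul]
    fin_cases i
    · have hneg : g (permS (permS z)) = g z := by
        rw [← opS_opS_apply g, heven]
      simp only [Fin.zero_eta, cuspVec_apply_zero, mul_add, mul_ite, mul_one, mul_zero,
        Finset.sum_add_distrib, Finset.sum_ite_eq, Finset.mem_image_of_mem, Finset.mem_univ,
        if_true, hG, hneg]
      ring
    · simpa [cuspVec] using apply_one_eq_zero_of_opR_eq_opS hg z
    · simpa [cuspVec] using apply_two_eq_zero_of_opR_eq_opS hg z
  rw [hsum]
  refine Submodule.sum_mem _ fun k hk => Submodule.smul_mem _ _ (Submodule.subset_span ?_)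
  obtain ⟨z, -, rfl⟩ := Finset.mem_image.1 hk
  exact ⟨z, rfl⟩

lemma boundary_eq_span : boundary opS opR =
    Submodule.span ℂ
      (Set.range fun z : PrimPair l => cuspVec (cusp z) - opS (cuspVec (cusp z))) := by
  refine le_antisymm ?_ (Submodule.span_le.2 ?_)
  · intro f hf
    obtain ⟨g, heven, hg, rfl⟩ := mem_boundary.1 hf
    have h := Submodule.mem_map_of_mem (f := 1 - opS) (mem_span_cuspVec hg heven)
    rwa [Submodule.map_span, ← Set.range_comp] at h
  · rintro _ ⟨z, rfl⟩
    exact cuspVec_sub_opS_mem_boundary _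

end Cusps

section CuspidalSubspace

variable {l : ℕ} [NeZero l]

lemma psiV_eq_neg_pairing (a : ZMod l) (b : ZMod (Nat.gcd a.val l)) (w : V l) :
    psiV l a b w = -pairing l (cuspVec ⟨a, b⟩ - opS (cuspVec ⟨a, b⟩)) (coeff l w) := by
  suffices h : psiV l a b =
      -(pairing l (cuspVec ⟨a, b⟩ - opS (cuspVec ⟨a, b⟩)) ∘ₗ coeff l) from
    LinearMap.congr_fun h w
  refine Finsupp.lhom_ext' fun ⟨i, z⟩ => LinearMap.ext_ring ?_
  change psiV l a b (Finsupp.single (i, z) 1) =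
    -pairing l (cuspVec ⟨a, b⟩ - opS (cuspVec ⟨a, b⟩)) (coeff l (Finsupp.single (i, z) 1))
  by_cases hz : copr l z.1 z.2
  · lift z to PrimPair l using hz
    rw [coeff_single, pairing, sumForm_single, apolar_apply, cuspVec_sub_opS_apply]
    fin_cases i <;> simp [psiV, z.2, cuspVec_apply_zero, cusp_eq_mk_iff, coe_permS,
      neg_eq_iff_eq_neg, sub_eq_add_neg, add_comm]
  · rw [coeff_single_of_not_copr i hz, map_zero, neg_zero]
    simp [psiV, hz]

lemma iInf_ker_psiV_eq :
    (⨅ (a : ZMod l), ⨅ (b : ZMod (Nat.gcd a.val l)), ⨅ (_ : IsUnit b), LinearMap.ker (psiV l a b)) =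
      ((pairing l).orthogonal (boundary opS opR)).comap (coeff l) := by
  ext w
  simp only [Submodule.mem_iInf, LinearMap.mem_ker, psiV_eq_neg_pairing, neg_eq_zero,
    Submodule.mem_comap]
  constructor
  · intro h
    have hle : boundary opS opR ≤ LinearMap.ker ((pairing l).flip (coeff l w)) := by
      rw [boundary_eq_span, Submodule.span_le]
      rintro _ ⟨z, rfl⟩
      exact h _ _ (isUnit_cusp_snd z)
    exact fun f hf => hle hf
  · exact fun h a b _ => h _ (cuspVec_sub_opS_mem_boundary _)

lemma S_eq_cuspidal : S l = cuspidal l := by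
  rw [S, iInf_ker_psiV_eq, ← symbolClass_comp_coeff, Submodule.map_comp,
    Submodule.map_comap_eq_of_surjective coeff_surjective, cuspidal]

end CuspidalSubspace

end MW

open MW in
theorem stmt8 (l : ℕ) (hl : 1 < l) [NeZero l] :
    (∀ φ : Module.Dual ℂ (M l), PD l φ = 0 ↔ ∀ m ∈ S l, φ m = 0) ∧
    Set.range (PD l) = (S l : Set (M l)) := by
  obtain ⟨hker, hrange⟩ :=
    ker_and_range_of_skew apply_dualityMap range_dualityMap_le (ker_dualityMap_le (l := l))
  have hPD : PD l = dualityMap l := funext PD_eq_dualityMap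
  rw [hPD, S_eq_cuspidal, ← hrange]
  refine ⟨fun φ => ?_, rfl⟩
  rw [← LinearMap.mem_ker, hker, hrange, Submodule.mem_dualAnnihilator]
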